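/- arXiv:2109.10205 — 3 statements merged into one kernel-verified Lean document; each statement's English description precedes it below -/
import Mathlib

section
/- Let $F:\mathbb{R}^{n}\to\mathbb{R}$, $F(z)=\tfrac12 z'Mz + d'z$ with $M$ symmetric positive definite, and let $\mathcal{Z}=\{z\in\mathbb{R}^n : \underline{z}\le z\le \bar z\text{ componentwise}\}$ be a nonempty box. Consider the coordinate-descent iteration that at step $k$ selects an index $i_k\in\{1,\dots,n\}$ and sets $z^{k+1}_{i_k}=\arg\min_{\zeta\in[\underline z_{i_k},\bar z_{i_k}]} F(z^k_1,\dots,\zeta,\dots,z^k_n)$ while keeping all other coordinates fixed. If the index rule is almost cyclic, i.e. there exists $N\ge n$ such that every coordinate index is selected at least once in every $N$ successive iterations, then the sequence $\{z^k\}$ converges at least linearly to the unique minimizer $z^*$ of $F$ over $\mathcal{Z}$: there exist $C>0$ and $q\in(0,1)$ such that $\|z^k-z^*\|_2\le C q^k$ for all $k$. -/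
/-!
Write `g x = M x + d` for the gradient of `F` and `μ > 0` for a constant with
`μ ∑ xᵢ² ≤ xᵀ M x`. Exactness of a coordinate step gives the one-dimensional variational inequality
`g_i(y) (ζ - y_i) ≥ 0` at the new iterate `y`, hence the sufficient decrease
`F(x) - F(y) ≥ (μ / 2) (x_i - y_i)²`.

Let `D` be the total length of the `N` steps of a window and `w` its last iterate. Every coordinate
is selected in the window, and after its last selection `w_j` stays fixed while `g_j` moves by at
most `L D`, where `L` bounds the entries of `M`; so the variational inequality holds at `w` up to the
error `L D |ζ - w_j|` (`approx_variational`). Strong convexity turns this into the error bound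
`F(w) - F(z*) ≤ n L² D² / (2μ)`. By Cauchy-Schwarz `D²` is at most `N` times the sum of
the squared steps, which the sufficient decrease bounds by a multiple of `F(z^k) - F(w)`
(`window_contraction`). Thus the gap `F(z^k) - F(z*)` contracts by a fixed factor over each window,
it decreases in between, and it dominates `(μ / 2) ‖z^k - z*‖²`.
-/

open Matrix Set

/-- The quadratic function `x ↦ ½ xᵀ M x + dᵀ x`. -/
noncomputable def quad {n : ℕ} (M : Matrix (Fin n) (Fin n) ℝ) (d z : Fin n → ℝ) : ℝ :=
  (1 / 2) * (z ⬝ᵥ (M *ᵥ z)) + d ⬝ᵥ z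

/-- The gradient `M x + d` of `quad M d` at `x`, for symmetric `M`. -/
def grad {n : ℕ} (M : Matrix (Fin n) (Fin n) ℝ) (d x : Fin n → ℝ) : Fin n → ℝ :=
  M *ᵥ x + d

lemma quad_add {n : ℕ} {M : Matrix (Fin n) (Fin n) ℝ} (hM : M.IsSymm) (d x h : Fin n → ℝ) :
    quad M d (x + h) = quad M d x + grad M d x ⬝ᵥ h + (1 / 2) * (h ⬝ᵥ (M *ᵥ h)) := by
  have e : x ⬝ᵥ (M *ᵥ h) = h ⬝ᵥ (M *ᵥ x) := by
    rw [dotProduct_mulVec, ← mulVec_transpose, hM.eq, dotProduct_comm]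
  simp only [quad, grad, mulVec_add, dotProduct_add, add_dotProduct, e,
    dotProduct_comm (M *ᵥ x) h]
  ring

lemma quad_update {n : ℕ} {M : Matrix (Fin n) (Fin n) ℝ} (hM : M.IsSymm) (d x : Fin n → ℝ)
    (i : Fin n) (ζ : ℝ) :
    quad M d (Function.update x i ζ) =
      quad M d x + grad M d x i * (ζ - x i) + (1 / 2) * (M i i * (ζ - x i) ^ 2) := by
  have e : Function.update x i ζ = x + Pi.single i (ζ - x i) := by
    ext j
    by_cases h : j = i
    · subst h; simp
    · simp [h]
  rw [e, quad_add hM]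
  simp [single_dotProduct, mulVec_single]
  ring

lemma grad_update {n : ℕ} (M : Matrix (Fin n) (Fin n) ℝ) (d x : Fin n → ℝ)
    (i j : Fin n) (ζ : ℝ) :
    grad M d (Function.update x i ζ) j = grad M d x j + M j i * (ζ - x i) := by
  have e : Function.update x i ζ = x + Pi.single i (ζ - x i) := by
    ext j
    by_cases h : j = i
    · subst h; simp
    · simp [h]
  rw [e]
  simp [grad, mulVec_add, mulVec_single]
  ring

/-- A positive definite form dominates a positive multiple of the squared Euclidean norm; the
constant is the minimum of the form over the compact unit sphere. -/
lemma exists_coercive {n : ℕ} {M : Matrix (Fin n) (Fin n) ℝ} (hM : M.PosDef) :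
    ∃ μ > 0, ∀ x : Fin n → ℝ, μ * ∑ i, x i ^ 2 ≤ x ⬝ᵥ (M *ᵥ x) := by
  have hpos : ∀ x : Fin n → ℝ, x ≠ 0 → 0 < x ⬝ᵥ (M *ᵥ x) := fun x hx => by
    simpa using hM.dotProduct_mulVec_pos hx
  let S : Set (Fin n → ℝ) := {x | ∑ i, x i ^ 2 = 1}
  have hS : IsCompact S := by
    refine Metric.isCompact_of_isClosed_isBounded
      (isClosed_eq (by fun_prop) continuous_const) ?_
    refine (Metric.isBounded_closedBall (x := (0 : Fin n → ℝ)) (r := 1)).subset fun x hx => ?_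
    rw [mem_closedBall_zero_iff, pi_norm_le_iff_of_nonneg zero_le_one]
    intro i
    have h1 : x i ^ 2 ≤ ∑ i, x i ^ 2 :=
      Finset.single_le_sum (f := fun i => x i ^ 2) (fun _ _ => sq_nonneg _) (Finset.mem_univ i)
    have h2 : ∑ i, x i ^ 2 = 1 := hx
    rw [Real.norm_eq_abs, ← sq_le_one_iff_abs_le_one]
    linarith
  have hc : Continuous fun x : Fin n → ℝ => x ⬝ᵥ (M *ᵥ x) := by
    simp only [dotProduct, mulVec]
    fun_prop
  -- A minimum over the sphere, which is empty when `n = 0`.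
  obtain ⟨μ, hμ, hmin⟩ : ∃ μ > 0, ∀ x ∈ S, μ ≤ x ⬝ᵥ (M *ᵥ x) := by
    rcases S.eq_empty_or_nonempty with h | h
    · exact ⟨1, one_pos, by simp [h]⟩
    · obtain ⟨x₀, hx₀, h₀⟩ := hS.exists_isMinOn h hc.continuousOn
      refine ⟨_, hpos x₀ ?_, fun x hx => h₀ hx⟩
      rintro rfl
      simp [S] at hx₀
  refine ⟨μ, hμ, fun x => ?_⟩
  by_cases hx : x = 0
  · simp [hx]
  have hs : 0 < ∑ i, x i ^ 2 := by
    obtain ⟨i, hi⟩ := Function.ne_iff.1 hx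
    exact Finset.sum_pos' (fun _ _ => sq_nonneg _)
      ⟨i, Finset.mem_univ i, lt_of_le_of_ne (sq_nonneg _) (Ne.symm (pow_ne_zero 2 hi))⟩
  set s := ∑ i, x i ^ 2 with hsdef
  have hr : (√s) ^ 2 = s := Real.sq_sqrt hs.le
  have h1 := hmin ((√s)⁻¹ • x) (by
    change ∑ i, ((√s)⁻¹ • x) i ^ 2 = 1
    simp only [Pi.smul_apply, smul_eq_mul, mul_pow, ← Finset.mul_sum, inv_pow, hr]
    exact inv_mul_cancel₀ hs.ne')
  rw [mulVec_smul, dotProduct_smul, smul_dotProduct, smul_eq_mul, smul_eq_mul, ← mul_assoc,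
    ← sq, inv_pow, hr, inv_mul_eq_div, le_div_iff₀ hs] at h1
  exact h1

/-- First-order optimality for a convex one-dimensional quadratic on an interval. -/
lemma variational_1d {l u p b c : ℝ} (hb : 0 < b) (hp : p ∈ Icc l u)
    (h : ∀ ζ ∈ Icc l u, 0 ≤ c * (ζ - p) + (1 / 2) * (b * (ζ - p) ^ 2)) :
    ∀ ζ ∈ Icc l u, 0 ≤ c * (ζ - p) := by
  intro ζ hζ
  by_contra! hneg
  set t := ζ - p with ht
  have hbt : 0 ≤ b * t ^ 2 := by positivity
  have hden : 0 < b * t ^ 2 - c * t := by linarith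
  -- A step fraction `s ∈ (0, 1]` small enough that the linear term dominates.
  set s := -(c * t) / (b * t ^ 2 - c * t) with hs
  have hs0 : 0 < s := div_pos (by linarith) hden
  have hs1 : s ≤ 1 := (div_le_one hden).2 (by linarith)
  have hmul : s * (b * t ^ 2 - c * t) = -(c * t) := div_mul_cancel₀ _ hden.ne'
  have hmem : p + s * t ∈ Icc l u := by
    have := (convex_Icc l u).add_smul_sub_mem hp hζ ⟨hs0.le, hs1⟩
    simpa using this
  have h1 := h _ hmem
  have h2 : 0 ≤ s * (c * t + (1 / 2) * (s * (b * t ^ 2))) := by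
    convert h1 using 1; ring
  have h3 := nonneg_of_mul_nonneg_right h2 hs0
  nlinarith

/-- First-order optimality in coordinate `i` at a point that is optimal along that coordinate. -/
lemma variational {n : ℕ} {M : Matrix (Fin n) (Fin n) ℝ} (hM : M.IsSymm) {d : Fin n → ℝ}
    {y : Fin n → ℝ} {i : Fin n} {l u : ℝ} (hii : 0 < M i i) (hy : y i ∈ Icc l u)
    (h : ∀ ζ ∈ Icc l u, quad M d y ≤ quad M d (Function.update y i ζ)) :
    ∀ ζ ∈ Icc l u, 0 ≤ grad M d y i * (ζ - y i) := by
  refine variational_1d hii hy fun ζ hζ => ?_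
  have := h ζ hζ
  rw [quad_update hM] at this
  linarith

/-- After a window of `p` exact coordinate steps, the variational inequality holds approximately in
every selected coordinate `j`: once `j` is selected it holds exactly, and a later step in another
coordinate leaves `z_j` alone and moves the `j`-th gradient entry by at most `L` times its length. -/
lemma approx_variational {n : ℕ} {M : Matrix (Fin n) (Fin n) ℝ} {d lo hi : Fin n → ℝ} {L : ℝ}
    (hL0 : 0 ≤ L) (hL : ∀ i j, |M i j| ≤ L) {z : ℕ → Fin n → ℝ} {idx : ℕ → Fin n}
    (hupd : ∀ k, z (k + 1) = Function.update (z k) (idx k) (z (k + 1) (idx k)))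
    (hvar : ∀ k, ∀ ζ ∈ Icc (lo (idx k)) (hi (idx k)),
      0 ≤ grad M d (z (k + 1)) (idx k) * (ζ - z (k + 1) (idx k)))
    (k p : ℕ) (j : Fin n) (hj : ∃ m, k ≤ m ∧ m < k + p ∧ idx m = j)
    (ζ : ℝ) (hζ : ζ ∈ Icc (lo j) (hi j)) :
    -(L * (∑ m ∈ Finset.range p, |z (k + m + 1) (idx (k + m)) - z (k + m) (idx (k + m))|) *
        |ζ - z (k + p) j|) ≤ grad M d (z (k + p)) j * (ζ - z (k + p) j) := by
  induction p with
  | zero => obtain ⟨m, h1, h2, -⟩ := hj; omega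
  | succ p ih =>
    rw [← add_assoc]
    by_cases hjp : idx (k + p) = j
    · have h1 := hvar (k + p)
      rw [hjp] at h1
      refine le_trans ?_ (h1 ζ hζ)
      rw [neg_nonpos]
      positivity
    · have ih' := ih (by
        obtain ⟨m, h1, h2, h3⟩ := hj
        refine ⟨m, h1, ?_, h3⟩
        rcases Nat.lt_succ_iff_lt_or_eq.1 (by omega : m < (k + p).succ) with h | h
        · exact h
        · subst h; exact absurd h3 hjp)
      have hzj : z (k + p + 1) j = z (k + p) j := by
        rw [hupd (k + p), Function.update_of_ne (Ne.symm hjp)]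
      have hg := grad_update M d (z (k + p)) (idx (k + p)) j (z (k + p + 1) (idx (k + p)))
      rw [← hupd (k + p)] at hg
      rw [hg, hzj, Finset.sum_range_succ]
      set δ := z (k + p + 1) (idx (k + p)) - z (k + p) (idx (k + p))
      have hb : |M j (idx (k + p)) * δ * (ζ - z (k + p) j)| ≤ L * |δ| * |ζ - z (k + p) j| := by
        rw [abs_mul, abs_mul]
        gcongr
        exact hL _ _
      have := neg_le_of_abs_le hb
      linarith

/-- An antitone nonnegative sequence contracting by the factor `r` every `N` steps is bounded by a
geometric sequence. The ratio is written as `q ^ 2`, as fits squared distances. -/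
lemma geometric_of_window {a : ℕ → ℝ} {r : ℝ} {N : ℕ} (hN : 0 < N) (hr0 : 0 < r) (hr1 : r < 1)
    (ha : ∀ k, 0 ≤ a k) (hanti : Antitone a) (hw : ∀ k, a (k + N) ≤ r * a k) :
    ∃ q ∈ Ioo (0 : ℝ) 1, ∀ k, a k ≤ a 0 / r * (q ^ k) ^ 2 := by
  have hN' : (2 * N : ℕ) ≠ 0 := by omega
  set q := r ^ (((2 * N : ℕ) : ℝ)⁻¹) with hq
  have hqr : q ^ (2 * N) = r := Real.rpow_inv_natCast_pow hr0.le hN'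
  have hq0 : 0 < q := Real.rpow_pos_of_pos hr0 _
  have hq1 : q < 1 := Real.rpow_lt_one hr0.le hr1 (by positivity)
  refine ⟨q, ⟨hq0, hq1⟩, fun k => ?_⟩
  induction k using Nat.strong_induction_on with
  | _ k ih =>
    by_cases hk : k < N
    · have h1 : r ≤ (q ^ k) ^ 2 := by
        rw [← hqr, ← pow_mul]
        exact pow_le_pow_of_le_one hq0.le hq1.le (by omega)
      calc a k ≤ a 0 := hanti (Nat.zero_le k)
        _ = a 0 / r * r := (div_mul_cancel₀ _ hr0.ne').symm
        _ ≤ _ := mul_le_mul_of_nonneg_left h1 (div_nonneg (ha 0) hr0.le)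
    · obtain ⟨m, rfl⟩ : ∃ m, k = m + N := ⟨k - N, by omega⟩
      calc a (m + N) ≤ r * a m := hw m
        _ ≤ r * (a 0 / r * (q ^ m) ^ 2) := mul_le_mul_of_nonneg_left (ih m (by omega)) hr0.le
        _ = q ^ (2 * N) * (a 0 / r * (q ^ m) ^ 2) := by rw [hqr]
        _ = a 0 / r * (q ^ (m + N)) ^ 2 := by ring

/-- Over a window in which every coordinate is selected, the final gap is at most a fixed multiple
of the decrease of the objective. The sufficient decrease of each step is the hypothesis `hdec`. -/
lemma window_contraction {n : ℕ} {M : Matrix (Fin n) (Fin n) ℝ} (hM : M.IsSymm)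
    {d lo hi : Fin n → ℝ} {L μ : ℝ} (hμ : 0 < μ)
    (hcoer : ∀ x : Fin n → ℝ, μ * ∑ i, x i ^ 2 ≤ x ⬝ᵥ (M *ᵥ x))
    (hL0 : 0 ≤ L) (hL : ∀ i j, |M i j| ≤ L) {z : ℕ → Fin n → ℝ} {idx : ℕ → Fin n}
    (hupd : ∀ k, z (k + 1) = Function.update (z k) (idx k) (z (k + 1) (idx k)))
    (hvar : ∀ k, ∀ ζ ∈ Icc (lo (idx k)) (hi (idx k)),
      0 ≤ grad M d (z (k + 1)) (idx k) * (ζ - z (k + 1) (idx k)))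
    (hdec : ∀ k, μ / 2 * (z (k + 1) (idx k) - z k (idx k)) ^ 2 ≤
      quad M d (z k) - quad M d (z (k + 1)))
    {N k : ℕ} (hcyc : ∀ j : Fin n, ∃ m, k ≤ m ∧ m < k + N ∧ idx m = j)
    {w : Fin n → ℝ} (hw : ∀ i, w i ∈ Icc (lo i) (hi i)) :
    quad M d (z (k + N)) - quad M d w ≤
      n * L ^ 2 * N / μ ^ 2 * (quad M d (z k) - quad M d (z (k + N))) := by
  set δ : ℕ → ℝ := fun m => z (k + m + 1) (idx (k + m)) - z (k + m) (idx (k + m)) with hδ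
  set D := ∑ m ∈ Finset.range N, |δ m| with hD
  have hsq : ∑ m ∈ Finset.range N, δ m ^ 2 ≤
      2 / μ * (quad M d (z k) - quad M d (z (k + N))) := by
    have h1 : ∑ m ∈ Finset.range N, μ / 2 * δ m ^ 2 ≤
        quad M d (z k) - quad M d (z (k + N)) :=
      calc _ ≤ ∑ m ∈ Finset.range N, (quad M d (z (k + m)) - quad M d (z (k + (m + 1)))) :=
            Finset.sum_le_sum fun m _ => hdec (k + m)
        _ = _ := Finset.sum_range_sub' (fun m => quad M d (z (k + m))) N
    rw [← Finset.mul_sum] at h1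
    calc _ = 2 / μ * (μ / 2 * ∑ m ∈ Finset.range N, δ m ^ 2) := by field_simp
      _ ≤ _ := by gcongr
  have hD2 : D ^ 2 ≤ N * ∑ m ∈ Finset.range N, δ m ^ 2 := by
    have := sq_sum_le_card_mul_sum_sq (s := Finset.range N) (f := fun m => |δ m|)
    simpa using this
  set x := z (k + N) with hx
  have hexp := quad_add hM d x (w - x)
  rw [add_sub_cancel] at hexp
  have hco := hcoer (w - x)
  -- Completing the square in each coordinate absorbs the error into the strong convexity term.
  have hj : ∀ j, -(L ^ 2 * D ^ 2 / (2 * μ)) ≤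
      grad M d x j * (w - x) j + μ / 2 * (w - x) j ^ 2 := by
    intro j
    have h1 := approx_variational hL0 hL hupd hvar k N j (hcyc j) (w j) (hw j)
    have h2 : 0 ≤ (L * D - μ * |w j - x j|) ^ 2 / (2 * μ) := by positivity
    have h3 : (L * D - μ * |w j - x j|) ^ 2 / (2 * μ) =
        L ^ 2 * D ^ 2 / (2 * μ) - L * D * |w j - x j| + μ / 2 * (w j - x j) ^ 2 := by
      rw [← sq_abs (w j - x j)]
      field_simp
      ring
    simp only [Pi.sub_apply]
    linarith
  have hsum := Finset.sum_le_sum fun j (_ : j ∈ Finset.univ) => hj j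
  rw [Finset.sum_add_distrib, ← Finset.mul_sum, Finset.sum_const, Finset.card_univ,
    Fintype.card_fin, nsmul_eq_mul] at hsum
  have hdot : grad M d x ⬝ᵥ (w - x) = ∑ j, grad M d x j * (w - x) j := rfl
  calc quad M d x - quad M d w ≤ n * L ^ 2 / (2 * μ) * D ^ 2 := by
        have : n * L ^ 2 / (2 * μ) * D ^ 2 = -(n * -(L ^ 2 * D ^ 2 / (2 * μ))) := by ring
        linarith
    _ ≤ n * L ^ 2 / (2 * μ) * (N * (2 / μ * (quad M d (z k) - quad M d x))) := by
        gcongr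
        exact hD2.trans (by gcongr)
    _ = _ := by field_simp

/-- Coordinate descent with an almost-cyclic index rule on a box-constrained
strictly convex quadratic program converges at least linearly to the unique
minimizer. -/
theorem cd_almost_cyclic_linear_convergence
    {n : ℕ} (M : Matrix (Fin n) (Fin n) ℝ) (d : Fin n → ℝ)
    (hMsymm : M.IsSymm) (hMpd : M.PosDef)
    (lo hi : Fin n → ℝ) (hbox : lo ≤ hi)
    (F : (Fin n → ℝ) → ℝ)
    (hF : ∀ z, F z = (1 / 2) * (z ⬝ᵥ (M *ᵥ z)) + d ⬝ᵥ z)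
    (Z : Set (Fin n → ℝ))
    (hZ : Z = {z | ∀ i, z i ∈ Icc (lo i) (hi i)})
    (z : ℕ → (Fin n → ℝ)) (idx : ℕ → Fin n)
    (hz0 : z 0 ∈ Z)
    (hstep : ∀ k,
      z (k + 1) = Function.update (z k) (idx k) (z (k + 1) (idx k)) ∧
      z (k + 1) (idx k) ∈ Icc (lo (idx k)) (hi (idx k)) ∧
      ∀ ζ ∈ Icc (lo (idx k)) (hi (idx k)),
        F (z (k + 1)) ≤ F (Function.update (z k) (idx k) ζ))
    (N : ℕ) (hNn : n ≤ N)
    (hcyc : ∀ k : ℕ, ∀ j : Fin n, ∃ m, k ≤ m ∧ m < k + N ∧ idx m = j)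
    (zstar : Fin n → ℝ)
    (hzstar : zstar ∈ Z ∧ ∀ w ∈ Z, F zstar ≤ F w) :
    ∃ C > (0 : ℝ), ∃ q ∈ Ioo (0 : ℝ) 1, ∀ k : ℕ,
      Real.sqrt (∑ i, (z k i - zstar i) ^ 2) ≤ C * q ^ k := by
  obtain ⟨μ, hμ, hcoer⟩ := exists_coercive hMpd
  have hFq : F = quad M d := funext hF
  subst hFq hZ
  have hdiag : ∀ i, μ ≤ M i i := fun i => by
    have h := hcoer (Pi.single i 1)
    have hs : ∑ j, (Pi.single i (1 : ℝ) : Fin n → ℝ) j ^ 2 = 1 := by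
      simp [Pi.single_apply, ite_pow]
    rw [hs] at h
    simpa [mulVec_single] using h
  have hupd := fun k => (hstep k).1
  have hvar : ∀ k, ∀ ζ ∈ Icc (lo (idx k)) (hi (idx k)),
      0 ≤ grad M d (z (k + 1)) (idx k) * (ζ - z (k + 1) (idx k)) := fun k =>
    variational hMsymm (hμ.trans_le (hdiag _)) (hstep k).2.1 fun ζ hζ => by
      have h := (hstep k).2.2 ζ hζ
      have e : Function.update (z (k + 1)) (idx k) ζ = Function.update (z k) (idx k) ζ := by
        rw [hupd k, Function.update_idem]
      rwa [e]
  have hmem : ∀ k i, z k i ∈ Icc (lo i) (hi i) := by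
    intro k
    induction k with
    | zero => exact hz0
    | succ k ih =>
      intro i
      by_cases h : i = idx k
      · subst h; exact (hstep k).2.1
      · rw [hupd k, Function.update_of_ne h]; exact ih i
  have hdec : ∀ k, μ / 2 * (z (k + 1) (idx k) - z k (idx k)) ^ 2 ≤
      quad M d (z k) - quad M d (z (k + 1)) := by
    intro k
    have e : Function.update (z (k + 1)) (idx k) (z k (idx k)) = z k := by
      rw [hupd k, Function.update_idem, Function.update_eq_self]
    have h1 := quad_update hMsymm d (z (k + 1)) (idx k) (z k (idx k))
    rw [e] at h1
    have h2 := hvar k _ (hmem k (idx k))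
    have h3 := mul_le_mul_of_nonneg_right (hdiag (idx k))
      (sq_nonneg (z k (idx k) - z (k + 1) (idx k)))
    rw [← neg_sub (z k (idx k)), neg_sq]
    linarith
  -- Quadratic growth of the objective away from the minimizer.
  have hgrow : ∀ k, μ / 2 * ∑ i, (z k i - zstar i) ^ 2 ≤ quad M d (z k) - quad M d zstar := by
    intro k
    have hexp := quad_add hMsymm d zstar (z k - zstar)
    rw [add_sub_cancel] at hexp
    have hco := hcoer (z k - zstar)
    have hg : 0 ≤ grad M d zstar ⬝ᵥ (z k - zstar) := by
      refine Finset.sum_nonneg fun i _ => ?_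
      refine variational hMsymm (hμ.trans_le (hdiag i)) (hzstar.1 i) (fun ζ hζ => ?_) _ (hmem k i)
      refine hzstar.2 _ fun j => ?_
      by_cases h : j = i
      · subst h; simpa using hζ
      · rw [Function.update_of_ne h]; exact hzstar.1 j
    simp only [Pi.sub_apply] at hco
    linarith
  set L := ∑ i, ∑ j, |M i j| with hLdef
  have hL0 : 0 ≤ L := by positivity
  have hL : ∀ i j, |M i j| ≤ L := fun i j =>
    (Finset.single_le_sum (f := fun j => |M i j|) (fun _ _ => abs_nonneg _)
      (Finset.mem_univ j)).trans
      (Finset.single_le_sum (f := fun i => ∑ j, |M i j|)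
        (fun _ _ => Finset.sum_nonneg fun _ _ => abs_nonneg _) (Finset.mem_univ i))
  set K := n * L ^ 2 * N / μ ^ 2 + 1 with hK
  have hK1 : 1 ≤ K := by
    have : 0 ≤ n * L ^ 2 * N / μ ^ 2 := by positivity
    linarith
  have hanti : Antitone fun k => quad M d (z k) - quad M d zstar :=
    antitone_nat_of_succ_le fun k => by
      have := hdec k
      have : 0 ≤ μ / 2 * (z (k + 1) (idx k) - z k (idx k)) ^ 2 := by positivity
      linarith
  have hN : 0 < N := by
    have := (idx 0).pos
    omega
  obtain ⟨q, hq, hgeo⟩ := geometric_of_window (a := fun k => quad M d (z k) - quad M d zstar)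
    (r := K / (1 + K)) hN (by positivity) ((div_lt_one (by positivity)).2 (by linarith))
    (fun k => sub_nonneg.2 (hzstar.2 _ (hmem k))) hanti (fun k => by
      have h1 := window_contraction hMsymm hμ hcoer hL0 hL hupd hvar hdec (hcyc k) hzstar.1
      have h2 : quad M d (z (k + N)) - quad M d zstar ≤ quad M d (z k) - quad M d zstar :=
        hanti (Nat.le_add_right k N)
      rw [div_mul_eq_mul_div, le_div_iff₀ (by positivity)]
      have h3 : n * L ^ 2 * N / μ ^ 2 = K - 1 := by rw [hK]; ring
      rw [h3] at h1
      linarith)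
  set A := 2 / μ * ((quad M d (z 0) - quad M d zstar) / (K / (1 + K))) with hA
  refine ⟨√A + 1, by positivity, q, hq, fun k => ?_⟩
  have hb : ∑ i, (z k i - zstar i) ^ 2 ≤ A * (q ^ k) ^ 2 := by
    calc _ = 2 / μ * (μ / 2 * ∑ i, (z k i - zstar i) ^ 2) := by field_simp
      _ ≤ 2 / μ * ((quad M d (z 0) - quad M d zstar) / (K / (1 + K)) * (q ^ k) ^ 2) :=
        mul_le_mul_of_nonneg_left ((hgrow k).trans (hgeo k)) (by positivity)
      _ = _ := by rw [hA]; ring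
  have hqk : 0 ≤ q ^ k := pow_nonneg hq.1.le k
  calc _ ≤ √(A * (q ^ k) ^ 2) := Real.sqrt_le_sqrt hb
    _ = √A * q ^ k := by rw [Real.sqrt_mul' _ (sq_nonneg _), Real.sqrt_sq hqk]
    _ ≤ _ := by gcongr; linarith
end

section
/- Let $R\in\mathbb{R}^{n_u\times n_u}$ be symmetric positive definite, $Q\in\mathbb{R}^{\hat n_x\times\hat n_x}$ symmetric positive semidefinite, $\rho>0$, let $H$ be the block-diagonal matrix $\mathrm{diag}(R,Q,R,Q,\dots,R,Q)$ of size $n_z=T(\hat n_x+n_u)$, and let $G$ be the block matrix encoding $\hat A\hat x_t+\hat B\hat u_t-\hat x_{t+1}$ for $t=0,\dots,T-1$ acting on $z=(\hat u_0,\hat x_1,\dots,\hat u_{T-1},\hat x_T)$ (with $\hat x_0$ fixed, i.e. the first block row is $[\hat B\;-I\;0\cdots0]$). Then $H_A=\tfrac1\rho H+G'G$ is symmetric positive definite. -/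
/-!
The Hessian is the sum of two positive semidefinite matrices, so it suffices that a vector `z`
annihilated by both quadratic forms vanishes. The form of `H` splits as
`∑ t, (uₜᵀ R uₜ + xₜ₊₁ᵀ Q xₜ₊₁)`, so its vanishing forces every input `uₜ` to be zero because
`R ≻ 0`. With zero inputs, `G z = 0` reads `x₁ = 0` and `xₜ₊₁ = A xₜ`, so forward substitution in
time kills every state.
-/

open Matrix Set

/-- The MPC dynamics equality-constraint matrix `G` acting on the decision
vector `z = (û₀, x̂₁, û₁, …, û_{T-1}, x̂_T)`: block row `t` encodes
`Â x̂ₜ + B̂ ûₜ - x̂ₜ₊₁` (with the `Â x̂₀` term absent since `x̂₀` is fixed). -/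
def mpcG {nx nu : ℕ} (T : ℕ) (A : Matrix (Fin nx) (Fin nx) ℝ)
    (B : Matrix (Fin nx) (Fin nu) ℝ) :
    Matrix (Fin T × Fin nx) (Fin T × (Fin nu ⊕ Fin nx)) ℝ :=
  fun p q =>
    match q.2 with
    | Sum.inl j => if q.1 = p.1 then B p.2 j else 0
    | Sum.inr j =>
        if q.1 = p.1 then (if p.2 = j then (-1 : ℝ) else 0)
        else if (q.1 : ℕ) + 1 = (p.1 : ℕ) then A p.2 j else 0

/-- The block-diagonal Hessian `H = diag(R, Q, R, Q, …, R, Q)` of the condensed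
MPC QP, acting on `z = (û₀, x̂₁, û₁, …, û_{T-1}, x̂_T)`. -/
def mpcH {nx nu : ℕ} (T : ℕ) (R : Matrix (Fin nu) (Fin nu) ℝ)
    (Q : Matrix (Fin nx) (Fin nx) ℝ) :
    Matrix (Fin T × (Fin nu ⊕ Fin nx)) (Fin T × (Fin nu ⊕ Fin nx)) ℝ :=
  fun p q =>
    if p.1 = q.1 then
      match p.2, q.2 with
      | Sum.inl i, Sum.inl j => R i j
      | Sum.inr i, Sum.inr j => Q i j
      | _, _ => 0
    else 0

/-- The quadratic form of `mpcH` decouples over time steps and over inputs and states. -/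
lemma mpcH_quadForm {nx nu T : ℕ} (R : Matrix (Fin nu) (Fin nu) ℝ)
    (Q : Matrix (Fin nx) (Fin nx) ℝ) (z : Fin T × (Fin nu ⊕ Fin nx) → ℝ) :
    z ⬝ᵥ (mpcH T R Q *ᵥ z) =
      ∑ t, ((fun j => z (t, Sum.inl j)) ⬝ᵥ (R *ᵥ fun j => z (t, Sum.inl j)) +
        (fun j => z (t, Sum.inr j)) ⬝ᵥ (Q *ᵥ fun j => z (t, Sum.inr j))) := by
  simp only [dotProduct, mulVec, Fintype.sum_prod_type, Fintype.sum_sum_type, mpcH, ite_mul,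
    zero_mul]
  simp [Finset.sum_add_distrib]

lemma mpcH_isSymm {nx nu T : ℕ} {R : Matrix (Fin nu) (Fin nu) ℝ} (hR : R.IsSymm)
    {Q : Matrix (Fin nx) (Fin nx) ℝ} (hQ : Q.IsSymm) : (mpcH T R Q).IsSymm := by
  ext ⟨s, a⟩ ⟨t, b⟩
  by_cases h : s = t
  · subst h
    rcases a with i | i <;> rcases b with j | j <;> simp [mpcH, hR.apply, hQ.apply]
  · simp [mpcH, h, Ne.symm h]

/-- The dynamics are block lower triangular with `-I` on the state diagonal, so with zero inputs
the only solution of `G z = 0` is `z = 0`. -/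
lemma eq_zero_of_mpcG_mulVec_eq_zero {nx nu T : ℕ} (A : Matrix (Fin nx) (Fin nx) ℝ)
    (B : Matrix (Fin nx) (Fin nu) ℝ) (z : Fin T × (Fin nu ⊕ Fin nx) → ℝ)
    (hu : ∀ t j, z (t, Sum.inl j) = 0) (hG : mpcG T A B *ᵥ z = 0) : z = 0 := by
  have hx : ∀ n : ℕ, ∀ h : n < T, ∀ i, z (⟨n, h⟩, Sum.inr i) = 0 := by
    intro n
    induction n using Nat.strong_induction_on with
    | _ n ih =>
      intro h i
      have h1 : ∑ q, mpcG T A B (⟨n, h⟩, i) q * z q = 0 := congrFun hG (⟨n, h⟩, i)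
      rw [Finset.sum_eq_single (⟨n, h⟩, Sum.inr i)] at h1
      · simpa [mpcG] using h1
      · rintro ⟨s, j | j⟩ - hne
        · simp [hu]
        · by_cases hs : s = ⟨n, h⟩
          · subst hs
            have hij : i ≠ j := by rintro rfl; exact hne rfl
            simp [mpcG, hij]
          · by_cases hs' : (s : ℕ) + 1 = n
            · rw [ih s (by omega) s.2 j, mul_zero]
            · simp [mpcG, hs, hs']
      · simp
  ext ⟨t, i | i⟩
  · exact hu t i
  · exact hx t t.2 i

/-- For `R ≻ 0`, `Q ⪰ 0` and `ρ > 0`, the augmented-Lagrangian Hessian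
`H_A = (1/ρ) H + Gᵀ G` of the condensed MPC QP is symmetric positive
definite. -/
theorem mpc_augLag_hessian_posDef
    {nx nu T : ℕ} (hT : 1 ≤ T)
    (A : Matrix (Fin nx) (Fin nx) ℝ) (B : Matrix (Fin nx) (Fin nu) ℝ)
    (R : Matrix (Fin nu) (Fin nu) ℝ) (hRsymm : R.IsSymm) (hRpd : R.PosDef)
    (Q : Matrix (Fin nx) (Fin nx) ℝ) (hQsymm : Q.IsSymm)
    (hQpsd : Q.PosSemidef)
    (ρ : ℝ) (hρ : 0 < ρ) :
    (ρ⁻¹ • mpcH T R Q + (mpcG T A B)ᵀ * mpcG T A B).IsSymm ∧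
    (ρ⁻¹ • mpcH T R Q + (mpcG T A B)ᵀ * mpcG T A B).PosDef := by
  have hsymm : (ρ⁻¹ • mpcH T R Q + (mpcG T A B)ᵀ * mpcG T A B).IsSymm :=
    ((mpcH_isSymm hRsymm hQsymm).smul _).add
      (by rw [IsSymm, transpose_mul, transpose_transpose])
  refine ⟨hsymm, PosDef.of_dotProduct_mulVec_pos
    (by rw [IsHermitian, conjTranspose_eq_transpose_of_trivial]; exact hsymm) fun z hz => ?_⟩
  have hRn (v : Fin nu → ℝ) : 0 ≤ v ⬝ᵥ (R *ᵥ v) := by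
    simpa using hRpd.posSemidef.dotProduct_mulVec_nonneg v
  have hQn (v : Fin nx → ℝ) : 0 ≤ v ⬝ᵥ (Q *ᵥ v) := by
    simpa using hQpsd.dotProduct_mulVec_nonneg v
  have hterm (t : Fin T) := add_nonneg (hRn fun j => z (t, Sum.inl j))
    (hQn fun j => z (t, Sum.inr j))
  have hH : 0 ≤ z ⬝ᵥ (mpcH T R Q *ᵥ z) := by
    rw [mpcH_quadForm]
    exact Finset.sum_nonneg fun t _ => hterm t
  have hG : 0 ≤ (mpcG T A B *ᵥ z) ⬝ᵥ (mpcG T A B *ᵥ z) :=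
    Finset.sum_nonneg fun i _ => mul_self_nonneg _
  have hform : star z ⬝ᵥ ((ρ⁻¹ • mpcH T R Q + (mpcG T A B)ᵀ * mpcG T A B) *ᵥ z) =
      ρ⁻¹ * (z ⬝ᵥ (mpcH T R Q *ᵥ z)) + (mpcG T A B *ᵥ z) ⬝ᵥ (mpcG T A B *ᵥ z) := by
    rw [star_trivial, add_mulVec, dotProduct_add, smul_mulVec, dotProduct_smul, smul_eq_mul,
      ← mulVec_mulVec, dotProduct_mulVec z (mpcG T A B)ᵀ, vecMul_transpose]
  rw [hform]
  have hρ' : 0 < ρ⁻¹ := inv_pos.mpr hρ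
  have hH' := mul_nonneg hρ'.le hH
  refine lt_of_le_of_ne (add_nonneg hH' hG) fun h0 => hz ?_
  have hH0 : z ⬝ᵥ (mpcH T R Q *ᵥ z) = 0 := by
    have : ρ⁻¹ * (z ⬝ᵥ (mpcH T R Q *ᵥ z)) = 0 := by linarith
    exact (mul_eq_zero.mp this).resolve_left hρ'.ne'
  have hG0 : mpcG T A B *ᵥ z = 0 := dotProduct_self_eq_zero.mp (by linarith)
  refine eq_zero_of_mpcG_mulVec_eq_zero A B z (fun t j => ?_) hG0
  rw [mpcH_quadForm, Finset.sum_eq_zero_iff_of_nonneg fun t _ => hterm t] at hH0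
  have ht := hH0 t (Finset.mem_univ t)
  have hu : (fun j => z (t, Sum.inl j)) = 0 := by
    by_contra hne
    have hpos := hRpd.dotProduct_mulVec_pos hne
    rw [star_trivial] at hpos
    linarith [hQn fun j => z (t, Sum.inr j)]
  exact congrFun hu j
end

section
/- Under the same hypotheses ($H$ symmetric positive semidefinite, $\rho>0$, $\tfrac1\rho H+G'G$ positive definite, $\mathcal{Z}$ a nonempty closed box, $z^*(\Lambda)$ the unique minimizer of the augmented Lagrangian over $\mathcal{Z}$), the gradient map $\nabla\phi_\rho(\Lambda)=Gz^*(\Lambda)-g$ of the augmented dual function is Lipschitz continuous with constant $1/\rho$: for all $\Lambda_1,\Lambda_2\in\mathbb{R}^m$, $\|Gz^*(\Lambda_1)-Gz^*(\Lambda_2)\|_2\le\tfrac1\rho\|\Lambda_1-\Lambda_2\|_2$. -/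
/-!
The minimizer `z₁` of `Lρ(·, Λ₁)` over the convex set `Z` satisfies a first-order variational
inequality in the direction `d = z₂ - z₁`, and `z₂` satisfies the one for `Λ₂` in the direction
`-d`. Adding the two gives `d'Hd + ρ ‖Gd‖² ≤ (Λ₁ - Λ₂)'Gd`. Since `H` is positive semidefinite,
`ρ ‖Gd‖² ≤ (Λ₁ - Λ₂)'Gd`, and Cauchy-Schwarz yields `ρ ‖Gd‖ ≤ ‖Λ₁ - Λ₂‖`.

The variational inequality (`first_order`) is obtained by restricting the quadratic `Lρ(·, Λ)` to
the segment `z + t d`, so no differentiation is involved.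
-/


open Matrix Set

/-- A quadratic `t D + t² q` that is nonnegative on `(0, 1]` has nonnegative slope at `0`. -/
lemma slope_nonneg (D q : ℝ) (hq : ∀ t : ℝ, 0 < t → t ≤ 1 → 0 ≤ t * D + t ^ 2 * q) : 0 ≤ D := by
  by_contra! hD
  have h1 := hq 1 one_pos le_rfl
  have hq0 : 0 < q := by linarith
  -- At `t = -D / (2q)` the quadratic term only cancels half of the linear one.
  have ht : 0 < -D / (2 * q) := by apply div_pos <;> linarith
  have h2 := hq _ ht (by rw [div_le_one (by linarith)]; linarith)
  have h3 : (-D / (2 * q)) * D + (-D / (2 * q)) ^ 2 * q = -(D ^ 2 / (4 * q)) := by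
    field_simp
    ring
  have h4 : 0 < D ^ 2 / (4 * q) := by
    have : D ^ 2 > 0 := by nlinarith
    positivity
  linarith

/-- Variational inequality for a point `z` minimizing the augmented Lagrangian along the segment
from `z` to `z + d`. -/
lemma first_order {n m : ℕ} (H : Matrix (Fin n) (Fin n) ℝ) (hH : H.IsSymm)
    (h : Fin n → ℝ) (G : Matrix (Fin m) (Fin n) ℝ) (g Λ : Fin m → ℝ) (ρ : ℝ)
    (L : (Fin n → ℝ) → ℝ)
    (hL : ∀ z, L z = (1 / 2) * (z ⬝ᵥ (H *ᵥ z)) + h ⬝ᵥ z + Λ ⬝ᵥ (G *ᵥ z - g) +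
        (ρ / 2) * ((G *ᵥ z - g) ⬝ᵥ (G *ᵥ z - g)))
    (z d : Fin n → ℝ) (hmin : ∀ t : ℝ, 0 < t → t ≤ 1 → L z ≤ L (z + t • d)) :
    0 ≤ d ⬝ᵥ (H *ᵥ z) + h ⬝ᵥ d + Λ ⬝ᵥ (G *ᵥ d) + ρ * ((G *ᵥ z - g) ⬝ᵥ (G *ᵥ d)) := by
  apply slope_nonneg _ ((1 / 2) * (d ⬝ᵥ (H *ᵥ d)) + (ρ / 2) * ((G *ᵥ d) ⬝ᵥ (G *ᵥ d)))
  intro t ht ht1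
  have key := hmin t ht ht1
  have hs : z ⬝ᵥ (H *ᵥ d) = d ⬝ᵥ (H *ᵥ z) := by
    rw [dotProduct_mulVec, ← mulVec_transpose, hH.eq, dotProduct_comm]
  have hG : G *ᵥ (z + t • d) - g = (G *ᵥ z - g) + t • (G *ᵥ d) := by
    rw [mulVec_add, mulVec_smul]; abel
  rw [hL, hL, hG] at key
  generalize G *ᵥ z - g = r at *
  generalize G *ᵥ d = e at *
  simp only [mulVec_add, mulVec_smul, dotProduct_add, add_dotProduct, smul_dotProduct,
    dotProduct_smul, smul_eq_mul, hs, dotProduct_comm e r] at key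
  linarith

/-- The gradient map `∇φ_ρ(Λ) = G z*(Λ) - g` of the augmented dual function is
Lipschitz continuous with constant `1/ρ` (in the Euclidean norm). -/
theorem augmented_dual_gradient_lipschitz
    {n m : ℕ} (lo hi : Fin n → ℝ) (hlohi : lo ≤ hi)
    (Z : Set (Fin n → ℝ))
    (hZ : Z = {z | ∀ i, z i ∈ Icc (lo i) (hi i)})
    (H : Matrix (Fin n) (Fin n) ℝ) (hHsymm : H.IsSymm)
    (hHpsd : H.PosSemidef)
    (h : Fin n → ℝ) (G : Matrix (Fin m) (Fin n) ℝ) (g : Fin m → ℝ)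
    (ρ : ℝ) (hρ : 0 < ρ)
    (hHA : (ρ⁻¹ • H + Gᵀ * G).PosDef)
    (Lρ : (Fin n → ℝ) → (Fin m → ℝ) → ℝ)
    (hLρ : ∀ z Λ, Lρ z Λ =
      (1 / 2) * (z ⬝ᵥ (H *ᵥ z)) + h ⬝ᵥ z + Λ ⬝ᵥ (G *ᵥ z - g) +
        (ρ / 2) * ((G *ᵥ z - g) ⬝ᵥ (G *ᵥ z - g)))
    (zstar : (Fin m → ℝ) → (Fin n → ℝ))
    (hzstar : ∀ Λ, zstar Λ ∈ Z ∧ (∀ z ∈ Z, Lρ (zstar Λ) Λ ≤ Lρ z Λ) ∧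
      (∀ w ∈ Z, (∀ z ∈ Z, Lρ w Λ ≤ Lρ z Λ) → w = zstar Λ)) :
    ∀ Λ₁ Λ₂ : Fin m → ℝ,
      Real.sqrt (∑ i, ((G *ᵥ zstar Λ₁) i - (G *ᵥ zstar Λ₂) i) ^ 2) ≤
        ρ⁻¹ * Real.sqrt (∑ i, (Λ₁ i - Λ₂ i) ^ 2) := by
  intro Λ₁ Λ₂
  obtain ⟨hm1, hmin1, -⟩ := hzstar Λ₁
  obtain ⟨hm2, hmin2, -⟩ := hzstar Λ₂
  generalize zstar Λ₁ = z₁ at *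
  generalize zstar Λ₂ = z₂ at *
  have hconv : Convex ℝ Z := by
    have : Z = Icc lo hi := by
      rw [hZ]
      ext z
      simp [Pi.le_def, forall_and]
    rw [this]
    exact convex_Icc lo hi
  have f1 := first_order H hHsymm h G g Λ₁ ρ (fun z => Lρ z Λ₁) (fun z => hLρ z Λ₁) z₁ (z₂ - z₁)
    (fun t h0 h1 => hmin1 _ (hconv.add_smul_sub_mem hm1 hm2 ⟨h0.le, h1⟩))
  have f2 := first_order H hHsymm h G g Λ₂ ρ (fun z => Lρ z Λ₂) (fun z => hLρ z Λ₂) z₂ (z₁ - z₂)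
    (fun t h0 h1 => hmin2 _ (hconv.add_smul_sub_mem hm2 hm1 ⟨h0.le, h1⟩))
  have hpsd : 0 ≤ (z₁ - z₂) ⬝ᵥ (H *ᵥ (z₁ - z₂)) := by
    simpa using hHpsd.dotProduct_mulVec_nonneg (z₁ - z₂)
  have hmono : ρ * ((G *ᵥ z₁ - G *ᵥ z₂) ⬝ᵥ (G *ᵥ z₁ - G *ᵥ z₂)) ≤
      (Λ₂ - Λ₁) ⬝ᵥ (G *ᵥ z₁ - G *ᵥ z₂) := by
    simp only [mulVec_sub, dotProduct_sub, sub_dotProduct] at f1 f2 hpsd ⊢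
    linarith
  have e1 : (G *ᵥ z₁ - G *ᵥ z₂) ⬝ᵥ (G *ᵥ z₁ - G *ᵥ z₂) =
      ∑ i, ((G *ᵥ z₁) i - (G *ᵥ z₂) i) ^ 2 := by
    simp [dotProduct, sq]
  have hcs : (Λ₂ - Λ₁) ⬝ᵥ (G *ᵥ z₁ - G *ᵥ z₂) ≤ Real.sqrt (∑ i, (Λ₁ i - Λ₂ i) ^ 2) *
      Real.sqrt (∑ i, ((G *ᵥ z₁) i - (G *ᵥ z₂) i) ^ 2) := by
    have := Real.sum_mul_le_sqrt_mul_sqrt Finset.univ (fun i => Λ₂ i - Λ₁ i)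
      (fun i => (G *ᵥ z₁) i - (G *ᵥ z₂) i)
    have hc : ∀ i, (Λ₂ i - Λ₁ i) ^ 2 = (Λ₁ i - Λ₂ i) ^ 2 := fun i => by ring
    simpa only [dotProduct, Pi.sub_apply, hc] using this
  rw [e1] at hmono
  have hS : 0 ≤ ∑ i, ((G *ᵥ z₁) i - (G *ᵥ z₂) i) ^ 2 := Finset.sum_nonneg fun i _ => sq_nonneg _
  have hsq := Real.mul_self_sqrt hS
  have ha := Real.sqrt_nonneg (∑ i, ((G *ᵥ z₁) i - (G *ᵥ z₂) i) ^ 2)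
  have hb := Real.sqrt_nonneg (∑ i, (Λ₁ i - Λ₂ i) ^ 2)
  rw [le_inv_mul_iff₀ hρ]
  generalize Real.sqrt (∑ i, ((G *ᵥ z₁) i - (G *ᵥ z₂) i) ^ 2) = a at *
  generalize Real.sqrt (∑ i, (Λ₁ i - Λ₂ i) ^ 2) = b at *
  rcases ha.eq_or_lt with h0 | h0
  · simpa [← h0] using hb
  · apply le_of_mul_le_mul_right _ h0
    rw [mul_assoc, hsq]
    linarith
end
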